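/- Let m ≥ 1, let F be a field of characteristic zero, set v = (1+u)^{m+1} u^{−m} ∈ F(u), and let u_0 = u, u_1, …, u_m be the m+1 distinct roots of (1+U)^{m+1} − v U^m in a splitting field over F(u). Let P ∈ F[w] be a polynomial. Then P(v) is a Laurent polynomial in u over F, and if P^> ∈ F[u] denotes its positive part, P^>(u) = Σ_{i>0} u^i · [u^i] P(v), then P(v) = P(0) + Σ_{i=0}^{m} ( P^>(u_i) − P^>(−1) ). -/

import Mathlib

open LaurentPolynomial

/-- The positive part (in `u`) of a Laurent polynomial: `[u^>]f = ∑_{i>0} u^i [u^i]f`,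
recorded as an ordinary polynomial. -/
noncomputable def posPart {F : Type*} [CommRing F] (f : F[T;T⁻¹]) : Polynomial F :=
  LaurentPolynomial.trunc f - Polynomial.C ((LaurentPolynomial.trunc f).coeff 0)

/-!
Write `A(X) = ∏ (1 - r_j X)`, where the `r_j` are the zeros of `v` as a function of `u` (here all
`r_j = -1`), so that `v = u A(1/u)`. By linearity take `P = w ^ k`. As `v ^ k = u ^ k A(1/u) ^ k`,
the value at `x` of the positive part of `v ^ k` is `[X ^ k] A ^ k (1 / (1 - x X) - 1)`. For the
roots `u_i` we have `∏ (1 - u_i X) = A - v X`, and the logarithmic derivative of this product shows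
that `H = 1 + ∑ (1 / (1 - u_i X) - 1)` satisfies `(A - v X) H = A - X A'`. Hence
`[X ^ (k + 1)] A ^ (k + 1) H = v [X ^ k] A ^ k H`, because `A ^ (k + 1) - X A ^ k A'` has no term of
degree `k + 1`, and so `[X ^ k] A ^ k H = v ^ k`. Thus the positive part sums to
`v ^ k - [X ^ k] A ^ k` over the `u_i`, and, by the same formula at the value `0` in place of `v`,
to `0 ^ k - [X ^ k] A ^ k` over the `r_j`.
-/

section PowerSeries

open PowerSeries hiding C

variable {R ι : Type*} [CommRing R]

/-- Both sides agree after multiplication by `k + 1`, as `(A ^ (k + 1))' = (k + 1) A ^ k A'`; the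
factor is cancelled for the power series with indeterminate coefficients over `ℤ`, which
specialises to `A`. -/
theorem coeff_succ_pow_succ_eq_coeff_pow_mul_derivative (A : R⟦X⟧) (k : ℕ) :
    coeff (k + 1) (A ^ (k + 1)) = coeff k (A ^ k * d⁄dX R A) := by
  let ψ : MvPolynomial ℕ ℤ →+* R :=
    MvPolynomial.eval₂Hom (Int.castRingHom R) fun n => coeff n A
  let B : (MvPolynomial ℕ ℤ)⟦X⟧ := mk MvPolynomial.X
  have hA : A = PowerSeries.map ψ B := by ext n; simp [ψ, B]
  have hdA : d⁄dX R A = PowerSeries.map ψ (d⁄dX _ B) := by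
    ext n; simp [coeff_derivative, ψ, B]
  have hB : coeff (k + 1) (B ^ (k + 1)) = coeff k (B ^ k * d⁄dX _ B) := by
    have h := congrArg (coeff k) (derivative_pow B (k + 1))
    rw [coeff_derivative, Nat.add_sub_cancel, mul_assoc,
      ← map_natCast (PowerSeries.C (R := MvPolynomial ℕ ℤ)), coeff_C_mul, mul_comm] at h
    exact mul_left_cancel₀ (Nat.cast_add_one_ne_zero k) (by simpa using h)
  rw [hdA, hA, ← map_pow, ← map_pow, ← map_mul, coeff_map, coeff_map, hB]

theorem coeff_pow_mul_eq_pow {A H : R⟦X⟧} {v : R} (hH : constantCoeff H = 1)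
    (hAH : (A - PowerSeries.C v * X) * H = A - X * d⁄dX R A) (k : ℕ) :
    coeff k (A ^ k * H) = v ^ k := by
  induction k with
  | zero => simpa using hH
  | succ k ih =>
    have hrec : A ^ (k + 1) * H
        = PowerSeries.C v * (A ^ k * H) * X + (A ^ (k + 1) - A ^ k * d⁄dX R A * X) := by
      linear_combination A ^ k * hAH
    rw [hrec, map_add, map_sub, coeff_succ_mul_X, coeff_succ_mul_X, coeff_C_mul, ih,
      coeff_succ_pow_succ_eq_coeff_pow_mul_derivative, sub_self, add_zero, pow_succ']

theorem one_sub_C_mul_X_mul_mk_pow (x : R) : (1 - PowerSeries.C x * X) * mk (x ^ ·) = 1 := by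
  ext n
  cases n with
  | zero => simp [sub_mul, mul_assoc]
  | succ n => simp [sub_mul, mul_assoc, coeff_succ_X_mul, coeff_one, pow_succ']

theorem X_mul_derivative_prod_one_sub_C_mul_X (s : Finset ι) (u : ι → R) :
    X * d⁄dX R (∏ i ∈ s, (1 - PowerSeries.C (u i) * X))
      = -((∏ i ∈ s, (1 - PowerSeries.C (u i) * X)) * ∑ i ∈ s, (mk (u i ^ ·) - 1)) := by
  classical
  induction s using Finset.induction_on with
  | empty => simp
  | insert a s ha ih =>
    have hlin : d⁄dX R (1 - PowerSeries.C (u a) * X) = -PowerSeries.C (u a) := by simp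
    rw [Finset.prod_insert ha, Finset.sum_insert ha, Derivation.leibniz, hlin, smul_eq_mul,
      smul_eq_mul]
    linear_combination (1 - PowerSeries.C (u a) * X) * ih
      + (∏ i ∈ s, (1 - PowerSeries.C (u i) * X)) * one_sub_C_mul_X_mul_mk_pow (u a)

theorem sum_coeff_pow_mul_mk_pow_sub_one {A : R⟦X⟧} {v : R} {s : Finset ι} {u : ι → R}
    (hA : ∏ i ∈ s, (1 - PowerSeries.C (u i) * X) = A - PowerSeries.C v * X) (k : ℕ) :
    ∑ i ∈ s, coeff k (A ^ k * (mk (u i ^ ·) - 1)) = v ^ k - coeff k (A ^ k) := by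
  have hlog := X_mul_derivative_prod_one_sub_C_mul_X s u
  have hlin : d⁄dX R (PowerSeries.C v * X) = PowerSeries.C v := by simp
  rw [hA, map_sub, hlin] at hlog
  have hpow : coeff k (A ^ k * (1 + ∑ i ∈ s, (mk (u i ^ ·) - 1))) = v ^ k :=
    coeff_pow_mul_eq_pow (by simp [map_sum]) (by linear_combination hlog) k
  rw [mul_add, mul_one, map_add, Finset.mul_sum, map_sum] at hpow
  rw [← hpow, add_sub_cancel_left]

end PowerSeries

section Reversal

open Finset
open Polynomial hiding C

variable {R ι : Type*} [CommRing R]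

theorem coe_prod_one_sub_C_mul_X (s : Finset ι) (u : ι → R) :
    ((∏ i ∈ s, (1 - Polynomial.C (u i) * X) : R[X]) : PowerSeries R)
      = ∏ i ∈ s, (1 - PowerSeries.C (u i) * PowerSeries.X) := by
  rw [← coeToPowerSeries.ringHom_apply, map_prod]
  simp only [map_sub, map_one, map_mul, coeToPowerSeries.ringHom_apply, coe_C, coe_X]

theorem toLaurent_prod_one_sub_C_mul_X (s : Finset ι) (u : ι → R) :
    toLaurent (∏ i ∈ s, (1 - Polynomial.C (u i) * X))
      = T #s * invert (toLaurent (∏ i ∈ s, (X - Polynomial.C (u i)))) := by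
  have hT : (T #s : R[T;T⁻¹]) = ∏ _i ∈ s, T 1 := by
    rw [prod_const, T_pow, mul_one]
  rw [hT, map_prod, map_prod, map_prod, ← prod_mul_distrib]
  refine prod_congr rfl fun i _ => ?_
  have hTinv : (T 1 * T (-1) : R[T;T⁻¹]) = 1 := by rw [← T_add, add_neg_cancel, T_zero]
  simp only [map_sub, map_mul, map_one, toLaurent_C, toLaurent_X, invert_T, invert_C, mul_sub,
    hTinv, mul_comm]

theorem prod_one_sub_C_mul_X_eq_of_prod_X_sub_C_eq {m : ℕ} {r u : Fin (m + 1) → R} {v : R}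
    (h : ∏ i, (X - Polynomial.C (u i)) = ∏ i, (X - Polynomial.C (r i)) - Polynomial.C v * X ^ m) :
    ∏ i, (1 - Polynomial.C (u i) * X)
      = ∏ i, (1 - Polynomial.C (r i) * X) - Polynomial.C v * X := by
  apply toLaurent_injective
  have hT : (T ((m + 1 : ℕ) : ℤ) * T (-m) : R[T;T⁻¹]) = T 1 := by
    rw [← T_add]; congr 1; push_cast; ring
  rw [map_sub, toLaurent_prod_one_sub_C_mul_X, toLaurent_prod_one_sub_C_mul_X, h, map_sub, map_sub,
    mul_sub, card_univ, Fintype.card_fin]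
  simp only [map_mul, toLaurent_C, toLaurent_X, toLaurent_X_pow, invert_C, invert_T,
    mul_left_comm _ (C v), hT]

end Reversal

section PosPart

open Finset
open Polynomial hiding C

variable {F E : Type*} [CommRing F] [CommRing E]

theorem posPart_add (f g : F[T;T⁻¹]) : posPart (f + g) = posPart f + posPart g := by
  simp only [_root_.posPart, map_add, coeff_add]
  ring

theorem trunc_T_mul_invert_toLaurent (k : ℕ) (q : F[X]) :
    trunc (T k * invert (toLaurent q)) = ∑ p ∈ antidiagonal k, monomial p.2 (q.coeff p.1) := by
  induction q using Polynomial.induction_on' with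
  | add p q hp hq => simp only [map_add, mul_add, hp, hq, coeff_add, sum_add_distrib]
  | monomial n a =>
    have hmon : T k * invert (toLaurent (monomial n a)) = C a * T (k - n) := by
      rw [← C_mul_X_pow_eq_monomial, toLaurent_C_mul_X_pow, map_mul, invert_C, invert_T,
        mul_left_comm, ← T_add, sub_eq_add_neg]
    simp only [hmon, trunc_C_mul_T, coeff_monomial, Nat.sum_antidiagonal_eq_sum_range_succ_mk]
    rw [sum_congr rfl fun i _ => apply_ite (monomial (k - i)) (n = i) a 0]
    simp only [map_zero, sum_ite_eq, mem_range, Nat.lt_succ_iff, sub_nonneg, Nat.cast_le,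
      Int.toNat_sub]

theorem eval₂_posPart_T_mul_invert_toLaurent (ψ : F →+* E) (x : E) (k : ℕ) (q : F[X]) :
    Polynomial.eval₂ ψ x (posPart (T k * invert (toLaurent q)))
      = PowerSeries.coeff k ((q.map ψ : PowerSeries E) * (PowerSeries.mk (x ^ ·) - 1)) := by
  have hconst : (trunc (T k * invert (toLaurent q))).coeff 0 = q.coeff k := by
    rw [trunc_T_mul_invert_toLaurent, finsetSum_coeff,
      Nat.sum_antidiagonal_eq_sum_range_succ_mk, sum_range_succ, sum_eq_zero, zero_add,
      Nat.sub_self, coeff_monomial_same]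
    exact fun i hi => coeff_monomial_of_ne _ (Nat.sub_pos_of_lt (mem_range.mp hi)).ne
  rw [_root_.posPart, eval₂_sub, Polynomial.eval₂_C, hconst, trunc_T_mul_invert_toLaurent,
    eval₂_finsetSum, mul_sub, mul_one, map_sub, PowerSeries.coeff_mul]
  simp only [eval₂_monomial, coeff_coe, coeff_map, PowerSeries.coeff_mk]

theorem prod_T_sub_C_mul_T_neg {m : ℕ} (r : Fin (m + 1) → F) :
    (∏ j, (T 1 - C (r j))) * T (-m)
      = T 1 * invert (toLaurent (∏ j, (1 - Polynomial.C (r j) * X))) := by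
  have hT : (T 1 * T (-((m + 1 : ℕ) : ℤ)) : F[T;T⁻¹]) = T (-m) := by
    rw [← T_add]; congr 1; push_cast; ring
  rw [toLaurent_prod_one_sub_C_mul_X, map_mul, invert_T, card_univ, Fintype.card_fin, ← mul_assoc,
    hT, involutive_invert, mul_comm]
  simp only [map_prod, map_sub, toLaurent_X, toLaurent_C]

theorem eval₂_posPart_C_mul_pow {m : ℕ} (ψ : F →+* E) (r : Fin (m + 1) → F) (a : F) (k : ℕ)
    (x : E) :
    Polynomial.eval₂ ψ x (posPart (C a * ((∏ j, (T 1 - C (r j))) * T (-m)) ^ k))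
      = ψ a * PowerSeries.coeff k ((∏ j, (1 - PowerSeries.C (ψ (r j)) * PowerSeries.X)) ^ k
          * (PowerSeries.mk (x ^ ·) - 1)) := by
  have hV : C a * ((∏ j, (T 1 - C (r j))) * T (-m)) ^ k
      = T k * invert (toLaurent
          (Polynomial.C a * (∏ j, (1 - Polynomial.C (r j) * X)) ^ k)) := by
    rw [prod_T_sub_C_mul_T_neg, mul_pow, T_pow, mul_one, map_mul, map_mul, toLaurent_C, invert_C,
      map_pow, map_pow, mul_left_comm]
  have hmap : (((Polynomial.C a * (∏ j, (1 - Polynomial.C (r j) * X)) ^ k).map ψ : E[X]) :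
        PowerSeries E)
      = PowerSeries.C (ψ a) * (∏ j, (1 - PowerSeries.C (ψ (r j)) * PowerSeries.X)) ^ k := by
    simp [Polynomial.map_prod, ← coe_prod_one_sub_C_mul_X]
  rw [hV, eval₂_posPart_T_mul_invert_toLaurent, hmap, mul_assoc, PowerSeries.coeff_C_mul]

end PosPart

section Reconstruction

open Finset
open Polynomial hiding C

theorem prod_X_sub_C_eq_of_injective {R : Type*} [CommRing R] [IsDomain R] {m : ℕ}
    {r u : Fin (m + 1) → R} {v : R} (hinj : Function.Injective u)
    (hroot : ∀ i, ∏ j, (u i - r j) = v * u i ^ m) :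
    ∏ i, (X - Polynomial.C (u i))
      = ∏ i, (X - Polynomial.C (r i)) - Polynomial.C v * X ^ m := by
  have hdeg (w : Fin (m + 1) → R) : (∏ i, (X - Polynomial.C (w i))).degree = ↑(m + 1) := by
    rw [← Lagrange.nodal_eq, Lagrange.degree_nodal, card_univ, Fintype.card_fin]
  have hlt : (Polynomial.C v * X ^ m).degree < (∏ i, (X - Polynomial.C (r i))).degree :=
    (degree_C_mul_X_pow_le m v).trans_lt (by rw [hdeg]; exact_mod_cast m.lt_succ_self)
  refine eq_of_degree_le_of_eval_index_eq univ hinj.injOn ?_ ?_ ?_ fun i hi => ?_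
  · rw [hdeg, card_univ, Fintype.card_fin]
  · rw [degree_sub_eq_left_of_degree_lt hlt, hdeg, hdeg]
  · rw [monic_prod_X_sub_C, (monic_prod_X_sub_C r univ).sub_of_left hlt]
  · rw [← Lagrange.nodal_eq, Lagrange.eval_nodal_at_node hi, eval_sub, ← Lagrange.nodal_eq,
      Lagrange.eval_nodal, hroot, eval_C_mul, eval_pow, eval_X, sub_self]

theorem sum_eval₂_posPart_C_mul_pow {F E : Type*} [CommRing F] [CommRing E]
    (ψ : F →+* E) {m : ℕ} {r : Fin (m + 1) → F} {u : Fin (m + 1) → E} {v : E}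
    (huv : ∏ i, (X - Polynomial.C (u i))
      = ∏ i, (X - Polynomial.C (ψ (r i))) - Polynomial.C v * X ^ m) (a : F) (k : ℕ) :
    ∑ i, Polynomial.eval₂ ψ (u i) (posPart (C a * ((∏ j, (T 1 - C (r j))) * T (-m)) ^ k))
      = ψ a * (v ^ k - PowerSeries.coeff k
          ((∏ j, (1 - PowerSeries.C (ψ (r j)) * PowerSeries.X)) ^ k)) := by
  have hrev := congrArg toPowerSeries (prod_one_sub_C_mul_X_eq_of_prod_X_sub_C_eq huv)
  rw [Polynomial.coe_sub, Polynomial.coe_mul, coe_C, coe_X, coe_prod_one_sub_C_mul_X,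
    coe_prod_one_sub_C_mul_X] at hrev
  simp only [eval₂_posPart_C_mul_pow, ← mul_sum, sum_coeff_pow_mul_mk_pow_sub_one hrev]

/-- The `r j` are the zeros, and by `huv` the `u i` the preimages of `v`, with multiplicity, of the
rational function `(∏ j, (U - r j)) / U ^ m`. -/
theorem laurent_reconstruction_from_roots_general {F E : Type*} [CommRing F] [CommRing E]
    (ψ : F →+* E) (m : ℕ) (r : Fin (m + 1) → F) (u : Fin (m + 1) → E) (v : E)
    (huv : ∏ i, (X - Polynomial.C (u i))
      = ∏ i, (X - Polynomial.C (ψ (r i))) - Polynomial.C v * X ^ m) (P : F[X]) :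
    P.eval₂ ψ v = ψ (P.eval 0) + ∑ i,
      (Polynomial.eval₂ ψ (u i) (posPart (P.eval₂ C ((∏ j, (T 1 - C (r j))) * T (-m))))
        - Polynomial.eval₂ ψ (ψ (r i))
            (posPart (P.eval₂ C ((∏ j, (T 1 - C (r j))) * T (-m))))) := by
  induction P using Polynomial.induction_on' with
  | add p q hp hq =>
    simp only [Polynomial.eval₂_add, posPart_add, eval_add, map_add, sum_sub_distrib,
      sum_add_distrib] at *
    linear_combination hp + hq
  | monomial k a =>
    have hr : ∏ i, (X - Polynomial.C (ψ (r i)))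
        = ∏ i, (X - Polynomial.C (ψ (r i))) - Polynomial.C 0 * X ^ m := by
      rw [map_zero, zero_mul, sub_zero]
    rw [sum_sub_distrib, eval₂_monomial, eval₂_monomial, sum_eval₂_posPart_C_mul_pow ψ huv,
      sum_eval₂_posPart_C_mul_pow ψ hr, eval_monomial, map_mul, map_pow, map_zero]
    ring

end Reconstruction

/-- Let `m ≥ 1`, `F` a field of characteristic zero, `v = (1+u)^{m+1} u^{−m}`, and let
`u_0 = u, u_1, …, u_m` be the `m+1` distinct roots of `(1+U)^{m+1} − v U^m` in a splitting
field `E` over `F(u)`.  Let `P ∈ F[w]`.  Then `P(v)` is a Laurent polynomial in `u` over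
`F`, and if `P^>` denotes its positive part then
`P(v) = P(0) + ∑_{i=0}^{m} (P^>(u_i) − P^>(−1))`. -/
theorem laurent_reconstruction_from_roots (F : Type*) [Field F] [CharZero F]
    (m : ℕ) (hm : 1 ≤ m)
    (E : Type*) [Field E] (φ : RatFunc F →+* E)
    (u : Fin (m + 1) → E) (hinj : Function.Injective u)
    (h0 : u 0 = φ RatFunc.X)
    (hroot : ∀ i, (1 + u i) ^ (m + 1)
      = φ ((1 + RatFunc.X) ^ (m + 1) / RatFunc.X ^ m) * (u i) ^ m)
    (P : Polynomial F) :
    Polynomial.eval₂ (φ.comp (algebraMap F (RatFunc F)))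
        (φ ((1 + RatFunc.X) ^ (m + 1) / RatFunc.X ^ m)) P
      = φ.comp (algebraMap F (RatFunc F)) (P.eval 0)
        + ∑ i : Fin (m + 1),
            (Polynomial.eval₂ (φ.comp (algebraMap F (RatFunc F))) (u i)
                (posPart (Polynomial.eval₂ LaurentPolynomial.C
                  ((1 + T 1) ^ (m + 1) * T (-(m : ℤ))) P))
              - Polynomial.eval₂ (φ.comp (algebraMap F (RatFunc F))) (-1)
                (posPart (Polynomial.eval₂ LaurentPolynomial.C
                  ((1 + T 1) ^ (m + 1) * T (-(m : ℤ))) P))) := by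
  simpa [add_comm] using laurent_reconstruction_from_roots_general
    (φ.comp (algebraMap F (RatFunc F))) m (fun _ => -1) u _
    (prod_X_sub_C_eq_of_injective hinj fun i => by simpa [add_comm] using hroot i) P
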